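/- Let G = C_2 ∗ C_2 (the infinite dihedral group) and let H be any homomorphic image of G (i.e. there exists a surjective group homomorphism G → H). Then for every generating pair (h1,h2) of H there exist a group homomorphism θ : G → H and a generating pair (g1,g2) of G with θ(g1) = h1 and θ(g2) = h2. -/

import Mathlib

/-- The cyclic group of order `m`. -/
abbrev Cyc (m : ℕ) : Type := Multiplicative (ZMod m)

/-- The hom from the cyclic group of order two given by an involution. -/
def cycHom {H : Type} [Group H] (g : H) (hg : g * g = 1) : Cyc 2 →* H where
  toFun m := if m = 1 then 1 else g
  map_one' := by simp
  map_mul' a b := by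
    have key : ∀ c : Cyc 2, c = 1 ∨ c = Multiplicative.ofAdd 1 := by decide
    have h1 : (Multiplicative.ofAdd 1 : Cyc 2) ≠ 1 := by decide
    have h2 : (Multiplicative.ofAdd 1 : Cyc 2) * Multiplicative.ofAdd 1 = 1 := by decide
    rcases key a with rfl | rfl <;> rcases key b with rfl | rfl <;> simp only [h1, h2, hg, if_true, if_false, one_mul, mul_one]

lemma cycHom_gen {H : Type} [Group H] (g : H) (hg : g * g = 1) :
    cycHom g hg (Multiplicative.ofAdd 1) = g := by
  have h1 : (Multiplicative.ofAdd 1 : Cyc 2) ≠ 1 := by decide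
  change (if (Multiplicative.ofAdd 1 : Cyc 2) = 1 then 1 else g) = g
  rw [if_neg h1]

abbrev gA : Monoid.Coprod (Cyc 2) (Cyc 2) := Monoid.Coprod.inl (Multiplicative.ofAdd 1)
abbrev gB : Monoid.Coprod (Cyc 2) (Cyc 2) := Monoid.Coprod.inr (Multiplicative.ofAdd 1)

lemma cyc_key : ∀ c : Cyc 2, c = 1 ∨ c = Multiplicative.ofAdd 1 := by decide

lemma gA_sq : gA * gA = 1 := by
  rw [gA, ← map_mul, show (Multiplicative.ofAdd 1 : Cyc 2) * Multiplicative.ofAdd 1 = 1 by decide, map_one]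

lemma gB_sq : gB * gB = 1 := by
  rw [gB, ← map_mul, show (Multiplicative.ofAdd 1 : Cyc 2) * Multiplicative.ofAdd 1 = 1 by decide, map_one]

lemma top_of_mem (S : Subgroup (Monoid.Coprod (Cyc 2) (Cyc 2))) (ha : gA ∈ S) (hb : gB ∈ S) :
    S = ⊤ := by
  rw [eq_top_iff]
  intro g _
  induction g using Monoid.Coprod.induction_on with
  | inl m =>
    rcases cyc_key m with rfl | rfl
    · rw [map_one]; exact S.one_mem
    · exact ha
  | inr m =>
    rcases cyc_key m with rfl | rfl
    · rw [map_one]; exact S.one_mem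
    · exact hb
  | mul a b h1 h2 => exact S.mul_mem (h1 trivial) (h2 trivial)

lemma exists_hom {H : Type} [Group H] (x y : H) (hx : x * x = 1) (hy : y * y = 1) :
    ∃ θ : Monoid.Coprod (Cyc 2) (Cyc 2) →* H, θ gA = x ∧ θ gB = y :=
  ⟨Monoid.Coprod.lift (cycHom x hx) (cycHom y hy), by
    rw [Monoid.Coprod.lift_apply_inl, cycHom_gen], by
    rw [Monoid.Coprod.lift_apply_inr, cycHom_gen]⟩

theorem stmt15 (H : Type) [Group H]
    (hH : ∃ φ : Monoid.Coprod (Cyc 2) (Cyc 2) →* H, Function.Surjective φ)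
    (h1 h2 : H) (hgen : Subgroup.closure {h1, h2} = ⊤) :
    ∃ (θ : Monoid.Coprod (Cyc 2) (Cyc 2) →* H)
      (g1 g2 : Monoid.Coprod (Cyc 2) (Cyc 2)),
      Subgroup.closure {g1, g2} = ⊤ ∧ θ g1 = h1 ∧ θ g2 = h2 := by
  obtain ⟨φ, hφ⟩ := hH
  obtain ⟨x, hxd⟩ : ∃ x, x = φ gA := ⟨_, rfl⟩
  obtain ⟨y, hyd⟩ : ∃ y, y = φ gB := ⟨_, rfl⟩
  have hx : x * x = 1 := by rw [hxd, ← map_mul, gA_sq, map_one]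
  have hy : y * y = 1 := by rw [hyd, ← map_mul, gB_sq, map_one]
  have hxi : x⁻¹ = x := inv_eq_of_mul_eq_one_left hx
  have hyi : y⁻¹ = y := inv_eq_of_mul_eq_one_left hy
  obtain ⟨r, hr⟩ : ∃ r, r = x * y := ⟨_, rfl⟩
  have hxr1 : x * r * x⁻¹ = r⁻¹ := by
    rw [hr, mul_inv_rev, hxi, hyi, ← mul_assoc, hx, one_mul]
  have hxr : ∀ k : ℤ, x * r ^ k = r ^ (-k) * x := by
    intro k
    rw [zpow_neg, ← inv_zpow, ← hxr1, conj_zpow]; group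
  have hyr : y = r ^ (-1 : ℤ) * x := by
    rw [← hxr, zpow_one, hr, ← mul_assoc, hx, one_mul]
  have hmm : ∀ j k : ℤ, r ^ j * x * (r ^ k * x) = r ^ (j - k) := by
    intro j k
    rw [mul_assoc, ← mul_assoc x, hxr, mul_assoc, hx, mul_one, ← zpow_add, sub_eq_add_neg]
  have form : ∀ h : H, (∃ k : ℤ, h = r ^ k) ∨ (∃ k : ℤ, h = r ^ k * x) := by
    intro h
    obtain ⟨g, rfl⟩ := hφ h
    induction g using Monoid.Coprod.induction_on with
    | inl m =>
      rcases cyc_key m with rfl | rfl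
      · left; exact ⟨0, by simp⟩
      · right; exact ⟨0, by rw [zpow_zero, one_mul]; exact hxd.symm⟩
    | inr m =>
      rcases cyc_key m with rfl | rfl
      · left; exact ⟨0, by simp⟩
      · right; exact ⟨-1, by rw [← hyr]; exact hyd.symm⟩
    | mul a b ha hb =>
      rw [map_mul]
      rcases ha with ⟨j, ha⟩ | ⟨j, ha⟩ <;> rcases hb with ⟨k, hb⟩ | ⟨k, hb⟩ <;> rw [ha, hb]
      · left; exact ⟨j + k, by rw [zpow_add]⟩
      · right; exact ⟨j + k, by rw [zpow_add, mul_assoc]⟩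
      · right; exact ⟨j - k, by rw [mul_assoc, hxr, ← mul_assoc, ← zpow_add, sub_eq_add_neg]⟩
      · left; exact ⟨j - k, hmm j k⟩
  have hsq : ∀ k : ℤ, r ^ k * x * (r ^ k * x) = 1 := by
    intro k; rw [hmm, sub_self, zpow_zero]
  have hmA : ∀ a b : Monoid.Coprod (Cyc 2) (Cyc 2), a ∈ Subgroup.closure {a, b} :=
    fun a b => Subgroup.subset_closure (by simp)
  have hmB : ∀ a b : Monoid.Coprod (Cyc 2) (Cyc 2), b ∈ Subgroup.closure {a, b} :=
    fun a b => Subgroup.subset_closure (by simp)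
  have inv_case : h1 * h1 = 1 → h2 * h2 = 1 → ∃ (θ : Monoid.Coprod (Cyc 2) (Cyc 2) →* H)
      (g1 g2 : Monoid.Coprod (Cyc 2) (Cyc 2)),
      Subgroup.closure {g1, g2} = ⊤ ∧ θ g1 = h1 ∧ θ g2 = h2 := by
    intro e1 e2
    obtain ⟨θ, ta, tb⟩ := exists_hom h1 h2 e1 e2
    exact ⟨θ, gA, gB, top_of_mem _ (hmA _ _) (hmB _ _), ta, tb⟩
  rcases form h1 with ⟨j, e1⟩ | ⟨j, e1⟩ <;> rcases form h2 with ⟨k, e2⟩ | ⟨k, e2⟩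
  · have hle : (⊤ : Subgroup H) ≤ Subgroup.zpowers r := by
      rw [← hgen, Subgroup.closure_le]
      rintro z (rfl | rfl)
      · exact ⟨j, e1.symm⟩
      · exact ⟨k, e2.symm⟩
    obtain ⟨m, hm⟩ := hle (Subgroup.mem_top x)
    have hm' : r ^ m = x := hm
    have hri : r⁻¹ = r := by rw [← hxr1, ← hm']; group
    have hrr : r * r = 1 := by
      nth_rewrite 1 [← hri]; exact inv_mul_cancel r
    have hall : ∀ k : ℤ, r ^ k * r ^ k = 1 := by
      intro k
      rw [← (Commute.refl r).mul_zpow, hrr, one_zpow]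
    exact inv_case (e1 ▸ hall j) (e2 ▸ hall k)
  · obtain ⟨θ, ta, tb⟩ := exists_hom (h1 * h2) h2
      (by rw [e1, e2, ← mul_assoc (r ^ j) (r ^ k) x, ← zpow_add]; exact hsq _) (by rw [e2]; exact hsq _)
    have h22 : h2 * h2 = 1 := by rw [e2]; exact hsq _
    refine ⟨θ, gA * gB, gB, top_of_mem _ ?_ (hmB _ _), ?_, tb⟩
    · have := Subgroup.mul_mem _ (hmA (gA * gB) gB) (hmB (gA * gB) gB)
      rwa [mul_assoc, gB_sq, mul_one] at this
    · rw [map_mul, ta, tb, mul_assoc, h22, mul_one]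
  · obtain ⟨θ, ta, tb⟩ := exists_hom (h2 * h1) h1
      (by rw [e1, e2, ← mul_assoc (r ^ k) (r ^ j) x, ← zpow_add]; exact hsq _) (by rw [e1]; exact hsq _)
    have h11 : h1 * h1 = 1 := by rw [e1]; exact hsq _
    refine ⟨θ, gB, gA * gB, top_of_mem _ ?_ (hmA _ _), tb, ?_⟩
    · have := Subgroup.mul_mem _ (hmB gB (gA * gB)) (hmA gB (gA * gB))
      rwa [mul_assoc, gB_sq, mul_one] at this
    · rw [map_mul, ta, tb, mul_assoc, h11, mul_one]
  · exact inv_case (e1 ▸ hsq j) (e2 ▸ hsq k)
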